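/- Let G be a finite identifiable block graph (i.e., a block graph with no true twins). Then the identifying code number of G satisfies γ^ID(G) ≤ n_Q(G), where n_Q(G) is the number of maximal cliques of G. -/

import Mathlib

open SimpleGraph

variable {V : Type*}

/-- The closed neighborhood `N[u]` of a vertex `u`. -/
def closedNbhd (G : SimpleGraph V) (u : V) : Set V := insert u (G.neighborSet u)

/-- `G` is identifiable: no two distinct vertices are true twins
(i.e. have the same closed neighborhood). -/
def Identifiable (G : SimpleGraph V) : Prop :=
  ∀ u v : V, u ≠ v → closedNbhd G u ≠ closedNbhd G v

/-- `G` has no false twins: no two distinct vertices have the same open neighborhood. -/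
def HasNoFalseTwins (G : SimpleGraph V) : Prop :=
  ∀ u v : V, u ≠ v → G.neighborSet u ≠ G.neighborSet v

/-- `C` is an identifying code of `G`. -/
def IsIdCode (G : SimpleGraph V) (C : Set V) : Prop :=
  (∀ u : V, (closedNbhd G u ∩ C).Nonempty) ∧
  ∀ u v : V, u ≠ v → closedNbhd G u ∩ C ≠ closedNbhd G v ∩ C

/-- `C` is a locating-dominating code of `G`. -/
def IsLDCode (G : SimpleGraph V) (C : Set V) : Prop :=
  (∀ u : V, (closedNbhd G u ∩ C).Nonempty) ∧
  ∀ u v : V, u ∉ C → v ∉ C → u ≠ v → G.neighborSet u ∩ C ≠ G.neighborSet v ∩ C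

/-- `C` is an open locating-dominating code of `G`. -/
def IsOLDCode (G : SimpleGraph V) (C : Set V) : Prop :=
  (∀ u : V, (G.neighborSet u ∩ C).Nonempty) ∧
  ∀ u v : V, u ≠ v → G.neighborSet u ∩ C ≠ G.neighborSet v ∩ C

/-- The identifying code number `γ^ID(G)`. -/
noncomputable def gammaID (G : SimpleGraph V) : ℕ :=
  sInf {n : ℕ | ∃ C : Set V, IsIdCode G C ∧ C.ncard = n}

/-- The locating-dominating number `γ^LD(G)`. -/
noncomputable def gammaLD (G : SimpleGraph V) : ℕ :=
  sInf {n : ℕ | ∃ C : Set V, IsLDCode G C ∧ C.ncard = n}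

/-- The open locating-dominating number `γ^OLD(G)`. -/
noncomputable def gammaOLD (G : SimpleGraph V) : ℕ :=
  sInf {n : ℕ | ∃ C : Set V, IsOLDCode G C ∧ C.ncard = n}

/-- `G` contains an induced cycle of length `n`. -/
def HasInducedCycle (G : SimpleGraph V) (n : ℕ) : Prop :=
  ∃ f : ZMod n → V, Function.Injective f ∧
    ∀ i j : ZMod n, G.Adj (f i) (f j) ↔ (j = i + 1 ∨ i = j + 1)

/-- `G` contains an induced diamond (`K₄` minus an edge). -/
def HasInducedDiamond (G : SimpleGraph V) : Prop :=
  ∃ a b c d : V, a ≠ b ∧ a ≠ c ∧ a ≠ d ∧ b ≠ c ∧ b ≠ d ∧ c ≠ d ∧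
    G.Adj a b ∧ G.Adj a c ∧ G.Adj b c ∧ G.Adj a d ∧ G.Adj b d ∧ ¬ G.Adj c d

/-- A block graph is a chordal (no induced cycle of length at least 4),
diamond-free graph. -/
def IsBlockGraph (G : SimpleGraph V) : Prop :=
  (∀ n : ℕ, 4 ≤ n → ¬ HasInducedCycle G n) ∧ ¬ HasInducedDiamond G

/-- `n_Q(G)`: the number of maximal cliques of `G`. -/
noncomputable def nQ (G : SimpleGraph V) : ℕ :=
  {s : Set V | G.IsClique s ∧ ∀ t : Set V, G.IsClique t → s ⊆ t → s = t}.ncard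

/-!
The proof is by induction on the number of vertices. In an identifiable block graph the first
vertex `p` of a longest induced path is pendant: a further neighbour would either prolong the path
or, after a rerouting, yield a longer one. If `x` is the neighbour of `p`, then `{p, x}` is a
maximal clique that is lost when `p` is deleted, so one more code vertex may be spent on `G` than
on the smaller graph. If `G - p` is identifiable, a code `D` of it is completed by `p` when `D`
meets the open neighbourhood of `x`, and by any other neighbour of `x` when it does not. Otherwise
`x` has a twin in `G - p`, so that `G - {p, x}` is identifiable, and `p` completes a code of it.
-/

section ClosedNeighborhoods

variable {G : SimpleGraph V} {S : Set V} {u v p x : V}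

theorem mem_closedNbhd : v ∈ closedNbhd G u ↔ v = u ∨ G.Adj u v := Iff.rfl

theorem self_mem_closedNbhd : u ∈ closedNbhd G u := Or.inl rfl

theorem mem_closedNbhd_of_adj (h : G.Adj u v) : v ∈ closedNbhd G u := Or.inr h

theorem mem_closedNbhd_comm : v ∈ closedNbhd G u ↔ u ∈ closedNbhd G v := by
  rw [mem_closedNbhd, mem_closedNbhd, eq_comm, G.adj_comm]

theorem adj_of_mem_closedNbhd (h : v ∈ closedNbhd G u) (hne : v ≠ u) : G.Adj u v :=
  h.resolve_left hne

theorem identifiable_iff_injective : Identifiable G ↔ Function.Injective (closedNbhd G) := by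
  simp only [Identifiable, Function.Injective, ne_eq, not_imp_not]

theorem closedNbhd_induce (u : S) : closedNbhd (G.induce S) u = (↑) ⁻¹' closedNbhd G u := by
  ext v
  simp only [mem_closedNbhd, Set.mem_preimage, Subtype.ext_iff, induce_adj]

theorem identifiable_induce_iff :
    Identifiable (G.induce S) ↔ S.InjOn fun u ↦ closedNbhd G u ∩ S := by
  rw [identifiable_iff_injective, Set.injOn_iff_injective]
  simp only [Function.Injective, Set.domRestrict_apply, closedNbhd_induce,
    Subtype.preimage_coe_eq_preimage_coe_iff, Set.inter_comm S]

theorem mem_closedNbhd_pendant_iff (hp : G.neighborSet p = {x}) :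
    p ∈ closedNbhd G u ↔ u = p ∨ u = x := by
  rw [mem_closedNbhd_comm, closedNbhd, hp, Set.mem_insert_iff, Set.mem_singleton_iff]

theorem adj_of_neighborSet_eq_singleton (hp : G.neighborSet p = {x}) : G.Adj p x := by
  rw [← mem_neighborSet, hp, Set.mem_singleton_iff]

theorem notMem_closedNbhd_pendant (hp : G.neighborSet p = {x}) (hxv : G.Adj x v) (hvp : v ≠ p) :
    v ∉ closedNbhd G p := by
  rw [closedNbhd, hp]
  rintro (rfl | rfl)
  exacts [hvp rfl, hxv.ne rfl]

theorem exists_adj_ne_of_pendant (hI : Identifiable G) (hp : G.neighborSet p = {x}) :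
    ∃ y, G.Adj x y ∧ y ≠ p := by
  by_contra! hall
  have hpx := adj_of_neighborSet_eq_singleton hp
  have hx : G.neighborSet x = {p} :=
    Set.Subset.antisymm hall (Set.singleton_subset_iff.2 hpx.symm)
  exact hI p x hpx.ne (by rw [closedNbhd, closedNbhd, hp, hx, Set.pair_comm])

end ClosedNeighborhoods

section PendantTwins

variable {G : SimpleGraph V} {p x z : V}

/- For `p` pendant at `x`, the equation `closedNbhd G z = closedNbhd G x \ {p}` says that `x` and
`z` are true twins of `G - p`; it entails that `z` differs from both `p` and `x`. -/
theorem mem_compl_pair_of_twin (hp : G.neighborSet p = {x})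
    (hz : closedNbhd G z = closedNbhd G x \ {p}) : z ∈ ({p, x}ᶜ : Set V) :=
  (mem_closedNbhd_pendant_iff hp).not.1 fun h ↦ (hz.subset h).2 rfl

theorem adj_of_twin (hp : G.neighborSet p = {x})
    (hz : closedNbhd G z = closedNbhd G x \ {p}) : G.Adj x z :=
  adj_of_mem_closedNbhd (hz.subset self_mem_closedNbhd).1
    fun h ↦ mem_compl_pair_of_twin hp hz (Or.inr h)

theorem exists_twin_of_not_identifiable_induce (hI : Identifiable G) (hp : G.neighborSet p = {x})
    (hS : ¬ Identifiable (G.induce {p}ᶜ)) : ∃ z, closedNbhd G z = closedNbhd G x \ {p} := by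
  rw [identifiable_induce_iff] at hS
  simp only [Set.InjOn, ← Set.sdiff_eq] at hS
  push Not at hS
  obtain ⟨u, hu, v, hv, huv, hne⟩ := hS
  wlog hpu : p ∈ closedNbhd G u generalizing u v
  · have hpv : p ∈ closedNbhd G v := by
      by_contra hpv
      rw [Set.sdiff_singleton_eq_self hpu, Set.sdiff_singleton_eq_self hpv] at huv
      exact hI u v hne huv
    exact this v hv u hu huv.symm hne.symm hpv
  obtain rfl : u = x := ((mem_closedNbhd_pendant_iff hp).1 hpu).resolve_left hu
  have hpv : p ∉ closedNbhd G v := by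
    rw [mem_closedNbhd_pendant_iff hp]
    rintro (rfl | rfl)
    exacts [hv rfl, hne rfl]
  exact ⟨v, by rw [huv, Set.sdiff_singleton_eq_self hpv]⟩

theorem identifiable_induce_of_twin (hI : Identifiable G) (hp : G.neighborSet p = {x})
    (hz : closedNbhd G z = closedNbhd G x \ {p}) : Identifiable (G.induce {p, x}ᶜ) := by
  rw [identifiable_induce_iff]
  intro u hu v hv huv
  have hagree : ∀ c ∈ ({p, x}ᶜ : Set V), (c ∈ closedNbhd G u ↔ c ∈ closedNbhd G v) := by
    intro c hc
    simpa only [Set.mem_inter_iff, hc, and_true] using Set.ext_iff.1 huv c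
  have hfar : ∀ w ∈ ({p, x}ᶜ : Set V), p ∉ closedNbhd G w := fun w hw ↦
    (mem_closedNbhd_pendant_iff hp).not.2 hw
  have htwin : ∀ w ∈ ({p, x}ᶜ : Set V), (x ∈ closedNbhd G w ↔ z ∈ closedNbhd G w) := by
    intro w hw
    have hwp : w ≠ p := fun h ↦ hw (Or.inl h)
    rw [mem_closedNbhd_comm, mem_closedNbhd_comm (v := z), hz, Set.mem_sdiff_singleton,
      and_iff_left hwp]
  by_contra hne
  refine hI u v hne (Set.ext fun c ↦ ?_)
  by_cases hc : c ∈ ({p, x}ᶜ : Set V)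
  · exact hagree c hc
  · obtain rfl | rfl := not_not.1 hc
    · exact iff_of_false (hfar u hu) (hfar v hv)
    · rw [htwin u hu, htwin v hv, hagree z (mem_compl_pair_of_twin hp hz)]

end PendantTwins

section InducedPaths

variable {G : SimpleGraph V} {m : ℕ} {u : V}

theorem zmod_eq_add_one_iff_val {n : ℕ} {i j : ZMod (n + 2)} :
    j = i + 1 ↔ j.val = i.val + 1 ∨ i.val = n + 1 ∧ j.val = 0 := by
  have hi := ZMod.val_lt i
  have hj := ZMod.val_lt j
  rw [← (ZMod.val_injective _).eq_iff, ZMod.val_add, ZMod.val_one'' (by omega)]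
  obtain hlt | hlast : i.val + 1 < n + 2 ∨ i.val = n + 1 := by omega
  · rw [Nat.mod_eq_of_lt hlt]
    omega
  · rw [hlast, Nat.mod_self]
    omega

theorem hasInducedCycle_of_adj_ends (f : pathGraph (m + 1) ↪g G) (hu : u ∉ Set.range f)
    (hadj : ∀ i, G.Adj u (f i) ↔ i = 0 ∨ i = Fin.last m) :
    HasInducedCycle G (m + 2) := by
  let g : Fin (m + 2) → V := Fin.cons u f
  have hg : ∀ i j : Fin (m + 2), G.Adj (g i) (g j) ↔
      (j.val = i.val + 1 ∨ i.val = m + 1 ∧ j.val = 0) ∨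
        (i.val = j.val + 1 ∨ j.val = m + 1 ∧ i.val = 0) := by
    intro i j
    cases i using Fin.cases <;> cases j using Fin.cases <;>
      simp only [g, Fin.cons_zero, Fin.cons_succ, G.irrefl, G.adj_comm _ u, hadj, f.map_adj_iff,
        pathGraph_adj, Fin.ext_iff, Fin.val_zero, Fin.val_succ, Fin.val_last, and_true,
        false_iff] <;> omega
  refine ⟨g, Fin.cons_injective_iff.2 ⟨hu, f.injective⟩, fun i j ↦ ?_⟩
  rw [zmod_eq_add_one_iff_val, zmod_eq_add_one_iff_val]
  exact hg i j

/-- The inclusion of a path as an initial segment of a longer one. -/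
def pathGraphCastLE {k n : ℕ} (h : k ≤ n) : pathGraph k ↪g pathGraph n where
  toEmbedding := Fin.castLEEmb h
  map_rel_iff' := by simp [pathGraph_adj]

/-- The inclusion of a path as the tail, obtained by omitting the first vertex, of a path with
one more vertex. -/
def pathGraphSucc (n : ℕ) : pathGraph n ↪g pathGraph (n + 1) where
  toEmbedding := Fin.succEmb n
  map_rel_iff' := by simp [pathGraph_adj]

theorem notMem_range_path (f : pathGraph (m + 1) ↪g G) (hzero : G.Adj u (f 0))
    (hone : ∀ i : Fin (m + 1), i.val = 1 → u ≠ f i) : u ∉ Set.range f := by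
  rintro ⟨i, rfl⟩
  have hi : i.val = 1 := by
    simpa [f.map_adj_iff, pathGraph_adj, eq_comm] using hzero
  exact hone i hi rfl

theorem adj_path_iff_eq_zero (hchordal : ∀ n, 4 ≤ n → ¬ HasInducedCycle G n)
    (f : pathGraph (m + 1) ↪g G) (hrange : u ∉ Set.range f) (hzero : G.Adj u (f 0))
    (hone : ∀ i : Fin (m + 1), i.val = 1 → ¬ G.Adj u (f i)) (i : Fin (m + 1)) :
    G.Adj u (f i) ↔ i = 0 := by
  refine ⟨fun hi ↦ ?_, fun hi ↦ hi ▸ hzero⟩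
  induction i using WellFoundedLT.induction with
  | ind i ih =>
  by_contra hi0
  have htwo : 2 ≤ i.val := by
    have hi1 : i.val ≠ 1 := fun h ↦ hone i h hi
    have := Fin.val_ne_zero_iff.2 hi0
    omega
  let e : pathGraph (i + 1) ↪g pathGraph (m + 1) := pathGraphCastLE i.isLt
  have hends : ∀ j, G.Adj u (f (e j)) ↔ j = 0 ∨ j = Fin.last i := by
    refine fun j ↦ ⟨fun hj ↦ ?_, ?_⟩
    · rw [or_iff_not_imp_right]
      intro hlast
      have hej : e j = 0 := ih (e j) (Fin.lt_last_iff_ne_last.2 hlast) hj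
      exact Fin.ext (show (e j).val = 0 by rw [hej, Fin.val_zero])
    · rintro (rfl | rfl)
      exacts [hzero, hi]
  exact hchordal (i + 2) (by omega)
    (hasInducedCycle_of_adj_ends (f.comp e) (fun ⟨j, hj⟩ ↦ hrange ⟨e j, hj⟩) hends)

theorem exists_pathGraph_embedding_cons (hchordal : ∀ n, 4 ≤ n → ¬ HasInducedCycle G n)
    (f : pathGraph (m + 1) ↪g G) (hzero : G.Adj u (f 0))
    (hone : ∀ i : Fin (m + 1), i.val = 1 → u ∉ closedNbhd G (f i)) :
    ∃ g : pathGraph (m + 2) ↪g G, ⇑g = Fin.cons u f := by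
  have hrange : u ∉ Set.range f :=
    notMem_range_path f hzero fun i hi h ↦ hone i hi (Or.inl h)
  have hadj := adj_path_iff_eq_zero hchordal f hrange hzero
    fun i hi h ↦ hone i hi (mem_closedNbhd_of_adj h.symm)
  let g : Fin (m + 2) → V := Fin.cons u f
  have hg : ∀ i j, G.Adj (g i) (g j) ↔ (pathGraph (m + 2)).Adj i j := by
    intro i j
    cases i using Fin.cases <;> cases j using Fin.cases <;>
      simp only [g, Fin.cons_zero, Fin.cons_succ, G.irrefl, G.adj_comm _ u, hadj, f.map_adj_iff,
        pathGraph_adj, Fin.ext_iff, Fin.val_zero, Fin.val_succ, false_iff] <;> omega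
  exact ⟨⟨⟨g, Fin.cons_injective_iff.2 ⟨hrange, f.injective⟩⟩, hg _ _⟩, rfl⟩

theorem isClique_closedNbhd_inter_closedNbhd (hdiamond : ¬ HasInducedDiamond G) {a b : V}
    (hab : G.Adj a b) : G.IsClique (closedNbhd G a ∩ closedNbhd G b) := by
  rintro c ⟨hca, hcb⟩ d ⟨hda, hdb⟩ hcd
  by_contra hncd
  have hac : a ≠ c := fun h ↦ hncd (h ▸ adj_of_mem_closedNbhd hda (h ▸ hcd.symm))
  have hbc : b ≠ c := fun h ↦ hncd (h ▸ adj_of_mem_closedNbhd hdb (h ▸ hcd.symm))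
  have had : a ≠ d := fun h ↦ hncd (h ▸ (adj_of_mem_closedNbhd hca (h ▸ hcd)).symm)
  have hbd : b ≠ d := fun h ↦ hncd (h ▸ (adj_of_mem_closedNbhd hcb (h ▸ hcd)).symm)
  exact hdiamond ⟨a, b, c, d, hab.ne, hac, had, hbc, hbd, hcd, hab,
    adj_of_mem_closedNbhd hca hac.symm, adj_of_mem_closedNbhd hcb hbc.symm,
    adj_of_mem_closedNbhd hda had.symm, adj_of_mem_closedNbhd hdb hbd.symm, hncd⟩

theorem IsBlockGraph.exists_path_replace_head (hB : IsBlockGraph G)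
    (f : pathGraph (m + 2) ↪g G) {w : V} (hw0 : G.Adj w (f 0)) (hw1 : G.Adj w (f 1)) :
    ∃ g : pathGraph (m + 2) ↪g G, g 0 = w ∧ g 1 = f 1 := by
  have hclique := isClique_closedNbhd_inter_closedNbhd hB.2 hw1
  have h10 : G.Adj (f 1) (f 0) := by simp [pathGraph_adj]
  have hf0 := And.intro (mem_closedNbhd_of_adj hw0) (mem_closedNbhd_of_adj h10)
  have hw2 : ∀ i : Fin (m + 1), i.val = 1 → w ∉ closedNbhd G (f i.succ) := by
    intro i hi hwi
    have h1i : G.Adj (f 1) (f i.succ) := by simp [pathGraph_adj, hi]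
    have hne : f 0 ≠ f i.succ := f.injective.ne (Fin.succ_ne_zero i).symm
    have h0i : G.Adj (f 0) (f i.succ) :=
      hclique hf0 ⟨mem_closedNbhd_comm.1 hwi, mem_closedNbhd_of_adj h1i⟩ hne
    simp [pathGraph_adj, hi] at h0i
  obtain ⟨g, hg⟩ :=
    exists_pathGraph_embedding_cons hB.1 (f.comp (pathGraphSucc (m + 1))) hw1 hw2
  exact ⟨g, congrFun hg 0, congrFun hg 1⟩

theorem mem_closedNbhd_of_adj_head_longest_path
    (hchordal : ∀ n, 4 ≤ n → ¬ HasInducedCycle G n) (f : pathGraph (m + 2) ↪g G)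
    (hlongest : IsEmpty (pathGraph (m + 3) ↪g G)) (hu : G.Adj u (f 0)) :
    u ∈ closedNbhd G (f 1) := by
  by_contra hu1
  obtain ⟨g, -⟩ := exists_pathGraph_embedding_cons hchordal f hu fun i hi ↦
    (Fin.ext hi : i = 1) ▸ hu1
  exact hlongest.false g

theorem IsBlockGraph.neighborSet_head_longest_path (hB : IsBlockGraph G) (hI : Identifiable G)
    (f : pathGraph (m + 2) ↪g G) (hlongest : IsEmpty (pathGraph (m + 3) ↪g G)) :
    G.neighborSet (f 0) = {f 1} := by
  have h01 : G.Adj (f 0) (f 1) := by simp [pathGraph_adj]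
  have hsub : closedNbhd G (f 0) ⊆ closedNbhd G (f 1) := by
    rintro c (rfl | hc)
    exacts [mem_closedNbhd_of_adj h01.symm,
      mem_closedNbhd_of_adj_head_longest_path hB.1 f hlongest hc.symm]
  by_contra hpendant
  obtain ⟨w, hw0, hw1⟩ : ∃ w, G.Adj (f 0) w ∧ w ≠ f 1 := by
    by_contra! hall
    exact hpendant (Set.Subset.antisymm hall (Set.singleton_subset_iff.2 h01))
  have hclique0 : G.IsClique (closedNbhd G (f 0)) :=
    Set.inter_eq_left.2 hsub ▸ isClique_closedNbhd_inter_closedNbhd hB.2 h01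
  have hsubw : closedNbhd G (f 0) ⊆ closedNbhd G w := fun c hc ↦
    or_iff_not_imp_left.2 fun hcw ↦ hclique0 (mem_closedNbhd_of_adj hw0) hc (Ne.symm hcw)
  obtain ⟨z, hzw, hz0⟩ := Set.exists_of_ssubset (hsubw.ssubset_of_ne (hI _ _ hw0.ne))
  have hwz : G.Adj w z := adj_of_mem_closedNbhd hzw fun h ↦ hz0 (h ▸ mem_closedNbhd_of_adj hw0)
  have hw1' : G.Adj w (f 1) := (adj_of_mem_closedNbhd (hsub (mem_closedNbhd_of_adj hw0)) hw1).symm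
  obtain ⟨g, hg0, hg1⟩ := hB.exists_path_replace_head f hw0.symm hw1'
  have hz1 : z ∈ closedNbhd G (f 1) :=
    hg1 ▸ mem_closedNbhd_of_adj_head_longest_path hB.1 g hlongest (hg0 ▸ hwz.symm)
  refine hz0 (or_iff_not_imp_left.2 fun hzf ↦ ?_)
  exact isClique_closedNbhd_inter_closedNbhd hB.2 hw1'
    ⟨mem_closedNbhd_of_adj hw0.symm, mem_closedNbhd_of_adj h01.symm⟩ ⟨hzw, hz1⟩ (Ne.symm hzf)

theorem exists_longest_path [Finite V] {a b : V} (hab : G.Adj a b) :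
    ∃ m, Nonempty (pathGraph (m + 2) ↪g G) ∧ IsEmpty (pathGraph (m + 3) ↪g G) := by
  have hedge : Nonempty (pathGraph 2 ↪g G) := by
    let g : Fin 2 → V := ![a, b]
    have hg : ∀ i j, G.Adj (g i) (g j) ↔ (pathGraph 2).Adj i j := by
      simp [g, Fin.forall_fin_two, pathGraph_adj, hab, hab.symm]
    have hinj : Function.Injective g := by
      simp [g, Function.Injective, Fin.forall_fin_two, hab.ne, hab.ne']
    exact ⟨⟨⟨g, hinj⟩, hg _ _⟩⟩
  have hbound : IsEmpty (pathGraph (Nat.card V + 2) ↪g G) := by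
    refine ⟨fun f ↦ ?_⟩
    have := Nat.card_le_card_of_injective f f.injective
    simp at this
  simpa using Nat.exists_not_and_succ_of_not_zero_of_exists
    (p := fun m ↦ IsEmpty (pathGraph (m + 2) ↪g G)) (not_isEmpty_iff.2 hedge) ⟨_, hbound⟩

theorem IsBlockGraph.exists_pendant [Finite V] (hB : IsBlockGraph G) (hI : Identifiable G)
    (hG : G ≠ ⊥) : ∃ p x, G.neighborSet p = {x} := by
  obtain ⟨a, b, hab⟩ := ne_bot_iff_exists_adj.1 hG
  obtain ⟨m, ⟨f⟩, hlongest⟩ := exists_longest_path hab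
  exact ⟨f 0, f 1, hB.neighborSet_head_longest_path hI f hlongest⟩

end InducedPaths

section MaximalCliques

variable {G : SimpleGraph V} {S K : Set V} {p x r : V}

theorem nQ_eq_ncard_maximal (G : SimpleGraph V) : nQ G = {s | Maximal G.IsClique s}.ncard := by
  simp only [nQ, maximal_iff]

theorem exists_maximal_clique_preimage_eq [Finite V] {s : Set S}
    (hs : Maximal (G.induce S).IsClique s) :
    ∃ t, Maximal G.IsClique t ∧ (↑) ⁻¹' t = s := by
  obtain ⟨t, hst, ht⟩ := (Set.toFinite {t | G.IsClique t}).exists_le_maximal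
    (isClique_induce_iff.1 hs.prop)
  have hclique : (G.induce S).IsClique ((↑) ⁻¹' t) :=
    isClique_induce_iff.2 (ht.prop.subset (Set.image_preimage_subset _ _))
  exact ⟨t, ht, (hs.eq_of_subset hclique (Set.image_subset_iff.1 hst)).symm⟩

theorem nQ_induce_lt [Finite V] (hK : Maximal G.IsClique K)
    (hKS : ¬ Maximal (G.induce S).IsClique ((↑) ⁻¹' K)) : nQ (G.induce S) < nQ G := by
  rw [nQ_eq_ncard_maximal, nQ_eq_ncard_maximal]
  have hsub : {s | Maximal (G.induce S).IsClique s} ⊆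
      Set.preimage (↑) '' ({t | Maximal G.IsClique t} \ {K}) := by
    intro s hs
    obtain ⟨t, ht, rfl⟩ := exists_maximal_clique_preimage_eq hs
    exact ⟨t, ⟨ht, fun h ↦ hKS (h ▸ hs)⟩, rfl⟩
  calc {s | Maximal (G.induce S).IsClique s}.ncard
      ≤ (Set.preimage (↑) '' ({t | Maximal G.IsClique t} \ {K})).ncard := Set.ncard_le_ncard hsub
    _ ≤ ({t | Maximal G.IsClique t} \ {K}).ncard := Set.ncard_image_le
    _ < {t | Maximal G.IsClique t}.ncard := Set.ncard_sdiff_singleton_lt_of_mem hK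

theorem maximal_isClique_pendant_pair (hp : G.neighborSet p = {x}) :
    Maximal G.IsClique {p, x} := by
  refine ⟨isClique_pair.2 fun _ ↦ adj_of_neighborSet_eq_singleton hp, fun t ht hpt c hc ↦ ?_⟩
  obtain rfl | hcp := eq_or_ne c p
  · exact Set.mem_insert c _
  · have hpc : c ∈ G.neighborSet p := ht (hpt (Set.mem_insert p _)) hc hcp.symm
    exact Or.inr (hp ▸ hpc)

theorem nQ_induce_lt_of_pendant [Finite V] (hp : G.neighborSet p = {x}) (hpS : p ∉ S)
    (hrS : r ∈ S) (hxr : G.Adj x r) : nQ (G.induce S) < nQ G := by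
  refine nQ_induce_lt (maximal_isClique_pendant_pair hp) fun hmax ↦ ?_
  have hclique : (G.induce S).IsClique (insert ⟨r, hrS⟩ ((↑) ⁻¹' {p, x})) := by
    refine hmax.prop.insert fun ⟨c, hcS⟩ hc _ ↦ ?_
    obtain rfl | rfl := hc
    exacts [absurd hcS hpS, hxr.symm]
  obtain hrp | hrx := hmax.mem_of_prop_insert hclique
  exacts [hpS (hrp ▸ hrS), hxr.ne' hrx]

theorem card_le_nQ_bot [Finite V] : Nat.card V ≤ nQ (⊥ : SimpleGraph V) := by
  rw [nQ_eq_ncard_maximal, ← Set.ncard_univ,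
    ← Set.ncard_image_of_injective _ Set.singleton_injective]
  refine Set.ncard_le_ncard ?_
  rintro _ ⟨v, -, rfl⟩
  refine ⟨isClique_singleton v, fun t ht hvt w hw ↦ ?_⟩
  by_contra hwv
  exact ht hw (hvt rfl) hwv

end MaximalCliques

section IdentifyingCodes

variable {G : SimpleGraph V} {S T C D : Set V} {p x y z c : V}

theorem inter_eq_inter_of_subset {A B : Set V} (hCD : C ⊆ D) (h : A ∩ D = B ∩ D) :
    A ∩ C = B ∩ C := by
  simpa only [Set.inter_assoc, Set.inter_eq_right.2 hCD] using congrArg (· ∩ C) h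

theorem inter_ne_inter_of_mem_of_notMem {A B : Set V} (hcC : c ∈ C) (hcA : c ∈ A) (hcB : c ∉ B) :
    A ∩ C ≠ B ∩ C :=
  fun h ↦ hcB (h.subset ⟨hcA, hcC⟩).1

/-- `C` dominates the vertices of `S` and separates them from one another, by their closed
neighborhoods in the whole graph `G`. This expresses codes of induced subgraphs inside `G`; code
vertices outside `S` are allowed. -/
def IsIdCodeOn (G : SimpleGraph V) (S C : Set V) : Prop :=
  (∀ u ∈ S, (closedNbhd G u ∩ C).Nonempty) ∧ S.InjOn fun u ↦ closedNbhd G u ∩ C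

theorem isIdCodeOn_univ : IsIdCodeOn G Set.univ C ↔ IsIdCode G C := by
  simp only [IsIdCodeOn, IsIdCode, Set.mem_univ, true_imp_iff, Set.injOn_univ, Function.Injective,
    ne_eq, not_imp_not]

theorem isIdCode_induce_iff {C : Set S} :
    IsIdCode (G.induce S) C ↔ IsIdCodeOn G S ((↑) '' C) := by
  simp only [IsIdCode, IsIdCodeOn, Set.injOn_iff_injective, Function.Injective,
    Set.domRestrict_apply, ← Set.image_preimage_inter, closedNbhd_induce, Set.image_nonempty,
    Subtype.val_injective.image_injective.eq_iff, Subtype.forall, ne_eq, not_imp_not]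

theorem exists_isIdCodeOn_of_induce {n : ℕ}
    (h : ∃ C, IsIdCode (G.induce S) C ∧ C.ncard ≤ n) :
    ∃ D ⊆ S, IsIdCodeOn G S D ∧ D.ncard ≤ n := by
  obtain ⟨C, hC, hn⟩ := h
  refine ⟨(↑) '' C, Subtype.coe_image_subset S C, isIdCode_induce_iff.1 hC, ?_⟩
  rwa [Set.ncard_image_of_injective _ Subtype.val_injective]

theorem IsIdCodeOn.mono (h : IsIdCodeOn G S C) (hTS : T ⊆ S) (hCD : C ⊆ D) :
    IsIdCodeOn G T D :=
  ⟨fun u hu ↦ (h.1 u (hTS hu)).mono (Set.inter_subset_inter_right _ hCD),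
    fun _ hu _ hv huv ↦ h.2 (hTS hu) (hTS hv) (inter_eq_inter_of_subset hCD huv)⟩

theorem IsIdCodeOn.insert (h : IsIdCodeOn G S C) (hdom : (closedNbhd G p ∩ C).Nonempty)
    (hsep : ∀ v ∈ S, closedNbhd G v ∩ C ≠ closedNbhd G p ∩ C) :
    IsIdCodeOn G (insert p S) C := by
  have hpS : p ∉ S := fun hp ↦ hsep p hp rfl
  refine ⟨Set.forall_mem_insert.2 ⟨hdom, h.1⟩, (Set.injOn_insert hpS).2 ⟨h.2, ?_⟩⟩
  rintro ⟨v, hv, hvp⟩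
  exact hsep v hv hvp

theorem Identifiable.isIdCode_univ (hI : Identifiable G) : IsIdCode G Set.univ := by
  simp only [IsIdCode, Set.inter_univ]
  exact ⟨fun u ↦ ⟨u, self_mem_closedNbhd⟩, hI⟩

theorem isIdCode_insert_pendant (hp : G.neighborSet p = {x}) (hD : IsIdCodeOn G {p, x}ᶜ D)
    (hcD : c ∈ D) (hxc : G.Adj x c) (hcp : c ≠ p) : IsIdCode G (insert p D) := by
  have hpD : p ∈ insert p D := Set.mem_insert p D
  have hpx : p ∈ closedNbhd G x := (mem_closedNbhd_pendant_iff hp).2 (Or.inr rfl)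
  have hpp : p ∈ closedNbhd G p := self_mem_closedNbhd
  have hfar : ∀ v ∈ ({p, x}ᶜ : Set V), p ∉ closedNbhd G v := fun v hv ↦
    (mem_closedNbhd_pendant_iff hp).not.2 hv
  have hx : IsIdCodeOn G (insert x {p, x}ᶜ) (insert p D) :=
    (hD.mono subset_rfl (Set.subset_insert p D)).insert ⟨p, hpx, hpD⟩ fun v hv ↦
      (inter_ne_inter_of_mem_of_notMem hpD hpx (hfar v hv)).symm
  rw [← isIdCodeOn_univ, ← Set.union_compl_self {p, x}, Set.insert_union, Set.singleton_union]
  refine hx.insert ⟨p, hpp, hpD⟩ ?_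
  rintro v (rfl | hv)
  · exact inter_ne_inter_of_mem_of_notMem (Or.inr hcD) (mem_closedNbhd_of_adj hxc)
      (notMem_closedNbhd_pendant hp hxc hcp)
  · exact (inter_ne_inter_of_mem_of_notMem hpD hpp (hfar v hv)).symm

theorem isIdCode_insert_neighbor (hp : G.neighborSet p = {x}) (hD : IsIdCodeOn G {p}ᶜ D)
    (hxD : Disjoint (G.neighborSet x) D) (hxy : G.Adj x y) (hyp : y ≠ p) :
    IsIdCode G (insert y D) := by
  have hpx : closedNbhd G p ∩ D = closedNbhd G x ∩ D := by
    have hpD : p ∉ D := fun h ↦ hxD.le_bot ⟨(adj_of_neighborSet_eq_singleton hp).symm, h⟩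
    rw [closedNbhd, closedNbhd, hp, Set.insert_inter_of_notMem hpD, Set.insert_eq,
      Set.union_inter_distrib_right, hxD.inter_eq, Set.union_empty]
  have hxp : x ∈ ({p}ᶜ : Set V) := (adj_of_neighborSet_eq_singleton hp).ne'
  have hDy : D ⊆ insert y D := Set.subset_insert y D
  have hdom : (closedNbhd G p ∩ insert y D).Nonempty :=
    (hpx ▸ hD.1 x hxp).mono (Set.inter_subset_inter_right _ hDy)
  rw [← isIdCodeOn_univ, ← Set.union_compl_self {p}, ← Set.insert_eq]
  refine (hD.mono subset_rfl hDy).insert hdom fun v hv hvp ↦ ?_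
  obtain rfl : v = x := hD.2 hv hxp ((inter_eq_inter_of_subset hDy hvp).trans hpx)
  exact inter_ne_inter_of_mem_of_notMem (Set.mem_insert y D) (mem_closedNbhd_of_adj hxy)
    (notMem_closedNbhd_pendant hp hxy hyp) hvp

theorem exists_isIdCode_insert_of_pendant (hI : Identifiable G) (hp : G.neighborSet p = {x})
    (hD : IsIdCodeOn G {p}ᶜ D) (hpD : p ∉ D) : ∃ c, IsIdCode G (insert c D) := by
  by_cases hxD : Disjoint (G.neighborSet x) D
  · obtain ⟨y, hxy, hyp⟩ := exists_adj_ne_of_pendant hI hp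
    exact ⟨y, isIdCode_insert_neighbor hp hD hxD hxy hyp⟩
  · obtain ⟨c, hxc, hcD⟩ := Set.not_disjoint_iff.1 hxD
    have hD' : IsIdCodeOn G {p, x}ᶜ D :=
      hD.mono (Set.compl_subset_compl.2 (Set.singleton_subset_iff.2 (Or.inl rfl))) subset_rfl
    exact ⟨p, isIdCode_insert_pendant hp hD' hcD hxc (ne_of_mem_of_not_mem hcD hpD)⟩

theorem isIdCode_insert_pendant_of_twin (hp : G.neighborSet p = {x})
    (hz : closedNbhd G z = closedNbhd G x \ {p}) (hD : IsIdCodeOn G {p, x}ᶜ D) (hxD : x ∉ D) :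
    IsIdCode G (insert p D) := by
  obtain ⟨d, hdz, hdD⟩ := hD.1 z (mem_compl_pair_of_twin hp hz)
  obtain ⟨hdx, hdp⟩ := hz.subset hdz
  exact isIdCode_insert_pendant hp hD hdD
    (adj_of_mem_closedNbhd hdx (ne_of_mem_of_not_mem hdD hxD)) hdp

end IdentifyingCodes

theorem IsBlockGraph.induce {G : SimpleGraph V} (hB : IsBlockGraph G) (S : Set V) :
    IsBlockGraph (G.induce S) := by
  refine ⟨?_, ?_⟩
  · rintro n hn ⟨f, hf, hadj⟩
    exact hB.1 n hn ⟨fun i ↦ (f i : V), Subtype.val_injective.comp hf, hadj⟩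
  · rintro ⟨a, b, c, d, hdiamond⟩
    simp only [ne_eq, ← Subtype.val_inj] at hdiamond
    exact hB.2 ⟨a, b, c, d, hdiamond⟩

theorem IsBlockGraph.exists_isIdCode_ncard_le_nQ [Finite V] {G : SimpleGraph V}
    (hB : IsBlockGraph G) (hI : Identifiable G) : ∃ C, IsIdCode G C ∧ C.ncard ≤ nQ G := by
  induction hn : Nat.card V using Nat.strong_induction_on generalizing V with
  | _ n ih
  obtain rfl | hG := eq_or_ne G ⊥
  · exact ⟨Set.univ, hI.isIdCode_univ, (Set.ncard_univ V).trans_le card_le_nQ_bot⟩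
  obtain ⟨p, x, hp⟩ := hB.exists_pendant hI hG
  have code_of_subgraph : ∀ S : Set V, p ∉ S → (∃ r ∈ S, G.Adj x r) → Identifiable (G.induce S) →
      ∃ D ⊆ S, IsIdCodeOn G S D ∧ ∀ c, (insert c D).ncard ≤ nQ G := by
    rintro S hpS ⟨r, hrS, hxr⟩ hIS
    have hcard : Nat.card S < n := hn ▸ Finite.card_subtype_lt hpS
    obtain ⟨D, hDS, hD, hle⟩ := exists_isIdCodeOn_of_induce (ih _ hcard (hB.induce S) hIS rfl)
    have hlt := nQ_induce_lt_of_pendant hp hpS hrS hxr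
    exact ⟨D, hDS, hD, fun c ↦ (Set.ncard_insert_le c D).trans (by omega)⟩
  by_cases hIp : Identifiable (G.induce {p}ᶜ)
  · obtain ⟨y, hxy, hyp⟩ := exists_adj_ne_of_pendant hI hp
    obtain ⟨D, hDS, hD, hcard⟩ := code_of_subgraph {p}ᶜ (fun h ↦ h rfl) ⟨y, hyp, hxy⟩ hIp
    obtain ⟨c, hc⟩ := exists_isIdCode_insert_of_pendant hI hp hD fun h ↦ hDS h rfl
    exact ⟨_, hc, hcard c⟩
  · obtain ⟨z, hz⟩ := exists_twin_of_not_identifiable_induce hI hp hIp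
    obtain ⟨D, hDS, hD, hcard⟩ := code_of_subgraph {p, x}ᶜ (fun h ↦ h (Or.inl rfl))
      ⟨z, mem_compl_pair_of_twin hp hz, adj_of_twin hp hz⟩ (identifiable_induce_of_twin hI hp hz)
    exact ⟨_, isIdCode_insert_pendant_of_twin hp hz hD fun h ↦ hDS h (Or.inr rfl), hcard p⟩

/-- For every finite identifiable block graph `G`, `γ^ID(G) ≤ n_Q(G)`. -/
theorem id_code_le_nQ {V : Type*} [Fintype V] (G : SimpleGraph V)
    (hB : IsBlockGraph G) (hI : Identifiable G) :
    gammaID G ≤ nQ G := by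
  obtain ⟨C, hC, hcard⟩ := hB.exists_isIdCode_ncard_le_nQ hI
  have hle : gammaID G ≤ C.ncard := Nat.sInf_le ⟨C, hC, rfl⟩
  exact hle.trans hcard
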